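/- Let p be a prime and F a separable primitive binary form of degree n ≥ 3 over ℤ_p with leading coefficient f_0 ≠ 0. If p > 2, then the map R_F^×/(R_F^×)² → ℤ_p^×/(ℤ_p^×)² induced by the norm N is surjective if and only if F is not evenly ramified. If p = 2, this map is surjective whenever R_F is maximal and F is not evenly ramified. -/

import Mathlib

open Polynomial Matrix MeasureTheory
open scoped Classical
noncomputable section
namespace BHS



/-! ### Binary forms and the rings they cut out, over a general base -/

variable (R K : Type) [CommRing R] [Field K] [Algebra R K]

/-- The one-variable polynomial `F(x,1)` of the binary form of degree `n` with
coefficient vector `c` (so `F(x,z) = ∑ c i · x^(n-i) · z^i`), over `K`. -/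
def binPoly (n : ℕ) (c : ℕ → R) : Polynomial K :=
  ∑ i ∈ Finset.range (n + 1), Polynomial.C (algebraMap R K (c i)) * Polynomial.X ^ (n - i)

/-- The étale algebra `K_F = K[x]/(F(x,1))`. -/
abbrev KF (n : ℕ) (c : ℕ → R) : Type := AdjoinRoot (binPoly R K n c)

/-- θ, the image of x in K_F. -/
def θF (n : ℕ) (c : ℕ → R) : KF R K n c := AdjoinRoot.root _

/-- `ζ_i = ∑_{j<i} f_j θ^{i-j}`. -/
def ζF (n : ℕ) (c : ℕ → R) (i : ℕ) : KF R K n c :=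
  ∑ j ∈ Finset.range i, algebraMap R (KF R K n c) (c j) * θF R K n c ^ (i - j)

/-- The ring `R_F`, as the free `R`-submodule of `K_F` with basis `1, ζ_1, …, ζ_{n-1}`
(a subring by Nakagawa's theorem). -/
def RFmod (n : ℕ) (c : ℕ → R) : Submodule R (KF R K n c) :=
  Submodule.span R ({1} ∪ {x | ∃ i, 1 ≤ i ∧ i ≤ n - 1 ∧ x = ζF R K n c i})

/-- The fractional ideal `I_F^k`, as the free `R`-submodule of `K_F` with basis
`1, θ, …, θ^k, ζ_{k+1}, …, ζ_{n-1}`. -/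
def IFmod (n : ℕ) (c : ℕ → R) (k : ℕ) : Submodule R (KF R K n c) :=
  Submodule.span R ({x | ∃ j ≤ k, x = θF R K n c ^ j} ∪
    {x | ∃ i, k + 1 ≤ i ∧ i ≤ n - 1 ∧ x = ζF R K n c i})

/-- `R_F` is the maximal order (the integral closure of `R`) in `K_F`. -/
def IsMaxOrder (n : ℕ) (c : ℕ → R) : Prop :=
  RFmod R K n c = Subalgebra.toSubmodule (integralClosure R (KF R K n c))

/-- `M` is stable under multiplication by `R_F`, i.e. `M` is an `R_F`-submodule of `K_F`. -/
def IsStable (n : ℕ) (c : ℕ → R) (M : Submodule R (KF R K n c)) : Prop :=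
  ∀ ρ ∈ RFmod R K n c, ∀ x ∈ M, ρ * x ∈ M

/-- `M` is an invertible fractional ideal of `R_F`. -/
def IsInvIdeal (n : ℕ) (c : ℕ → R) (M : Submodule R (KF R K n c)) : Prop :=
  IsStable R K n c M ∧
    ∃ N : Submodule R (KF R K n c), IsStable R K n c N ∧ M * N = RFmod R K n c

/-- The principal fractional ideal of `R_F` generated by `α`. -/
def principal (n : ℕ) (c : ℕ → R) (α : KF R K n c) : Submodule R (KF R K n c) :=
  Submodule.span R {α} * RFmod R K n c

/-- `ρ` is a unit of the order `R_F`. -/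
def IsUnitRF (n : ℕ) (c : ℕ → R) (ρ : KF R K n c) : Prop :=
  ρ ∈ RFmod R K n c ∧ ∃ σ ∈ RFmod R K n c, ρ * σ = 1

/-- `#R_F^×[2]`, the number of 2-torsion units of `R_F`. -/
def twoTorsUnitsCount (n : ℕ) (c : ℕ → R) : ℕ :=
  Nat.card {ρ : KF R K n c // ρ ∈ RFmod R K n c ∧ ρ ^ 2 = 1}

/-- The number of 2-torsion elements of the ideal class group `Cl(R_F)`: the number of
invertible fractional ideals of `R_F` whose square is principal, counted modulo
principal fractional ideals. -/
def clTwoCount (n : ℕ) (c : ℕ → R) : ℕ :=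
  Nat.card (Quot (fun (I J : {M : Submodule R (KF R K n c) //
      IsInvIdeal R K n c M ∧
        ∃ α : KF R K n c, IsUnit α ∧ M * M = principal R K n c α}) =>
    ∃ α : KF R K n c, IsUnit α ∧
      (I : Submodule R (KF R K n c)) =
        Submodule.span R {α} * (J : Submodule R (KF R K n c))))

/-- `α ∈ K_F` is totally positive: positive under every real embedding. -/
def TotPos (n : ℕ) (c : ℕ → R) (α : KF R K n c) : Prop :=
  ∀ φ : KF R K n c →+* ℝ, 0 < φ α

/-- The number of 2-torsion elements of the narrow class group `Cl⁺(R_F)`. -/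
def clTwoCountPlus (n : ℕ) (c : ℕ → R) : ℕ :=
  Nat.card (Quot (fun (I J : {M : Submodule R (KF R K n c) //
      IsInvIdeal R K n c M ∧
        ∃ α : KF R K n c, IsUnit α ∧ TotPos R K n c α ∧ M * M = principal R K n c α}) =>
    ∃ α : KF R K n c, IsUnit α ∧ TotPos R K n c α ∧
      (I : Submodule R (KF R K n c)) =
        Submodule.span R {α} * (J : Submodule R (KF R K n c))))

/-- The order of the ideal class group of `R_F`. -/
def clCount (n : ℕ) (c : ℕ → R) : ℕ :=
  Nat.card (Quot (fun (I J : {M : Submodule R (KF R K n c) // IsInvIdeal R K n c M}) =>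
    ∃ α : KF R K n c, IsUnit α ∧
      (I : Submodule R (KF R K n c)) =
        Submodule.span R {α} * (J : Submodule R (KF R K n c))))

/-- The order of the narrow class group of `R_F`. -/
def clCountPlus (n : ℕ) (c : ℕ → R) : ℕ :=
  Nat.card (Quot (fun (I J : {M : Submodule R (KF R K n c) // IsInvIdeal R K n c M}) =>
    ∃ α : KF R K n c, IsUnit α ∧ TotPos R K n c α ∧
      (I : Submodule R (KF R K n c)) =
        Submodule.span R {α} * (J : Submodule R (KF R K n c))))




/-! ### p-adic machinery -/

variable (p : ℕ) [Fact p.Prime]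

instance : MeasurableSpace ℤ_[p] := borel _
instance : BorelSpace ℤ_[p] := ⟨rfl⟩

/-- Haar probability measure on `ℤ_p^n`. -/
def haarP (n : ℕ) : Measure (Fin n → ℤ_[p]) :=
  Measure.addHaarMeasure ⟨⟨Set.univ, isCompact_univ⟩, by rw [interior_univ]; exact Set.univ_nonempty⟩

/-- The `p`-adic density of `A` within `B` (subsets of the coefficient space `ℤ_p^n`). -/
def densIn (n : ℕ) (A B : Set (Fin n → ℤ_[p])) : ℝ :=
  (haarP p n A).toReal / (haarP p n B).toReal

/-- The coefficient vector of the degree-`n` binary form with leading coefficient `f0` and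
remaining coefficients `v`. -/
def consF0 (n : ℕ) (f0 : ℤ_[p]) (v : Fin n → ℤ_[p]) : ℕ → ℤ_[p] :=
  fun j => if j = 0 then f0 else if h : j - 1 < n then v ⟨j - 1, h⟩ else 0

/-- The reduction of the binary form with coefficients `c` modulo `p`, as a polynomial in
two variables `x = X 0`, `z = X 1` over `F_p`. -/
def redForm (n : ℕ) (c : ℕ → ℤ_[p]) : MvPolynomial (Fin 2) (ZMod p) :=
  ∑ i ∈ Finset.range (n + 1),
    MvPolynomial.C (PadicInt.toZMod (c i)) * MvPolynomial.X 0 ^ (n - i) * MvPolynomial.X 1 ^ i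

/-- `F` is squareful over `ℤ_p`: `F ≡ κ·z^{e}·H² (mod p)` with `e > 0`, `κ ∈ F_p^×` and
`H` a monic binary form over `F_p` (hence not divisible by `z`). -/
def SquarefulP (n : ℕ) (c : ℕ → ℤ_[p]) : Prop :=
  ∃ (κ : (ZMod p)ˣ) (e d : ℕ) (H : MvPolynomial (Fin 2) (ZMod p)),
    0 < e ∧ H.IsHomogeneous d ∧ MvPolynomial.coeff (Finsupp.single 0 d) H = 1 ∧
    redForm p n c = MvPolynomial.C (κ : ZMod p) * MvPolynomial.X 1 ^ e * H ^ 2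

/-- `F` is evenly ramified over `ℤ_p`: `F ≡ κ·H² (mod p)` with `κ ∈ F_p^×`. -/
def EvenRamP (n : ℕ) (c : ℕ → ℤ_[p]) : Prop :=
  ∃ (κ : (ZMod p)ˣ) (H : MvPolynomial (Fin 2) (ZMod p)),
    redForm p n c = MvPolynomial.C (κ : ZMod p) * H ^ 2

/-- `F` is primitive over `ℤ_p`: its coefficients generate the unit ideal. -/
def PrimP (n : ℕ) (c : ℕ → ℤ_[p]) : Prop := ∃ i ≤ n, IsUnit (c i)

/-- `F` is separable (of degree `n`) over `ℚ_p`. -/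
def SepDegP (n : ℕ) (c : ℕ → ℤ_[p]) : Prop :=
  (binPoly ℤ_[p] ℚ_[p] n c).Separable ∧ (binPoly ℤ_[p] ℚ_[p] n c).natDegree = n

/-- The determinant of the Sylvester matrix of `F(x,1)` (of formal degree n) and
`F'(x,1)` (of formal degree n-1); it equals `±f_0` times the discriminant of the form. -/
def sylvDet (S : Type) [CommRing S] (n : ℕ) (c : ℕ → S) : S :=
  Matrix.det (Matrix.of (fun (i j : Fin (n + (n - 1))) =>
    if (i : ℕ) < n - 1 then
      (if (i : ℕ) ≤ (j : ℕ) ∧ (j : ℕ) ≤ (i : ℕ) + n then c ((j : ℕ) - (i : ℕ)) else 0)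
    else
      (if (i : ℕ) - (n - 1) ≤ (j : ℕ) ∧ (j : ℕ) ≤ ((i : ℕ) - (n - 1)) + (n - 1) then
        ((n - ((j : ℕ) - ((i : ℕ) - (n - 1))) : ℕ) : S) * c ((j : ℕ) - ((i : ℕ) - (n - 1)))
      else 0)))

/-- The discriminant of the form with coefficients `c` is not divisible by `p²`. -/
def DiscOK (n : ℕ) (c : ℕ → ℤ_[p]) : Prop :=
  ¬ ((p : ℤ_[p]) ^ 2 * c 0 ∣ sylvDet ℤ_[p] n c)

/-- The reduction modulo `p` of the degree-`n` binary form with coefficients `c` is a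
separable binary form over `F_p`. -/
def SepFormModP (n : ℕ) (c : ℕ → ℤ_[p]) : Prop :=
  (∑ i ∈ Finset.range (n + 1),
      Polynomial.C (PadicInt.toZMod (c i)) * (Polynomial.X : Polynomial (ZMod p)) ^ (n - i)).Separable ∧
  n - 1 ≤ (∑ i ∈ Finset.range (n + 1),
      Polynomial.C (PadicInt.toZMod (c i)) * (Polynomial.X : Polynomial (ZMod p)) ^ (n - i)).natDegree

/-!
By Nakagawa's multiplication rules the elements of `R_F` are the values at `θ` of the polynomials
`a + ⌊F q / xⁿ⌋`, where `⌊·⌋` discards negative powers of `x`. Multiplication by such an element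
on polynomials of degree less than `n`, corrected by a multiple of `F`, is given by an integral
matrix whose entries are polynomials in the coefficients of `F`, `a` and `q`, with no division by
`f₀`. Its determinant is the norm and can be computed after reduction mod `p`, even when `p ∣ f₀`:
a drop of the degree of `F` from `n` to `d` contributes the factor `a ^ (n - d)`, and the norm
from `k[x]/(F)` is multiplicative in `F`.

When `n` is odd, scalars already have norms in every class. For `n` even and `p > 2`, Hensel's
lemma reduces the question to norms modulo squares in `𝔽_p`. If `F ≡ κ H²` all norms are squares.
Otherwise `F ≡ gᵉ h` with `g` irreducible, `e` odd and `g ∤ h`, and an element congruent to `1`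
mod `h`, with prescribed norm `v` from the finite field `𝔽_p[x]/(g)`, has norm `vᵉ`. For `p = 2`,
if `F` mod `2` is not a square then some coefficient `f` of `xᵏ` with `k` odd is a unit; the
element given by `q = xⁿ⁻ᵏ` has trace `k f`, a unit, and by Hensel's lemma `det (1 + t M) = u`,
where `M` is its matrix, is solvable in `t` for every unit `u`.
-/

section FormElem

variable {A B : Type*} [CommRing A] [CommRing B]

theorem coeff_modByMonic_X_pow_of_le (P : A[X]) {n i : ℕ} (hi : n ≤ i) :
    (P %ₘ X ^ n).coeff i = 0 := by
  nontriviality A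
  refine coeff_eq_zero_of_degree_lt ((degree_modByMonic_lt P (monic_X_pow n)).trans_le ?_)
  rw [degree_X_pow]
  exact_mod_cast hi

theorem coeff_divByMonic_X_pow (P : A[X]) (n i : ℕ) : (P /ₘ X ^ n).coeff i = P.coeff (i + n) := by
  conv_rhs => rw [← modByMonic_add_div P (X ^ n), coeff_add, coeff_X_pow_mul,
    coeff_modByMonic_X_pow_of_le P (Nat.le_add_left n i), zero_add]

theorem natDegree_modByMonic_X_pow_le (P : A[X]) (n : ℕ) : (P %ₘ X ^ n).natDegree ≤ n :=
  (natDegree_modByMonic_le P (monic_X_pow n)).trans (natDegree_X_pow_le n)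

theorem coeff_mul_modByMonic_X_pow {P : A[X]} {i : ℕ} (hP : P.natDegree ≤ i) (Q : A[X]) (n : ℕ) :
    (P * (Q %ₘ X ^ n)).coeff (i + n) = 0 := by
  rw [coeff_mul_add_eq_of_natDegree_le hP (natDegree_modByMonic_X_pow_le Q n),
    coeff_modByMonic_X_pow_of_le Q le_rfl, mul_zero]

theorem map_divByMonic_X_pow (φ : A →+* B) (P : A[X]) (n : ℕ) :
    (P /ₘ X ^ n).map φ = P.map φ /ₘ X ^ n := by
  rw [map_divByMonic _ (monic_X_pow n), Polynomial.map_pow, map_X]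

theorem add_divByMonic_X_pow (P Q : A[X]) (n : ℕ) :
    (P + Q) /ₘ X ^ n = P /ₘ X ^ n + Q /ₘ X ^ n := by
  ext i
  simp only [coeff_divByMonic_X_pow, coeff_add]

theorem sub_divByMonic_X_pow (P Q : A[X]) (n : ℕ) :
    (P - Q) /ₘ X ^ n = P /ₘ X ^ n - Q /ₘ X ^ n := by
  ext i
  simp only [coeff_divByMonic_X_pow, coeff_sub]

theorem C_mul_divByMonic_X_pow (t : A) (P : A[X]) (n : ℕ) :
    C t * P /ₘ X ^ n = C t * (P /ₘ X ^ n) := by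
  ext i
  simp only [coeff_divByMonic_X_pow, coeff_C_mul]

theorem mul_divByMonic_X_pow {F : A[X]} {n : ℕ} (hF : F.natDegree ≤ n) (Q : A[X]) :
    F * (Q /ₘ X ^ n) /ₘ X ^ n = F * Q /ₘ X ^ n /ₘ X ^ n := by
  ext i
  simp only [coeff_divByMonic_X_pow]
  conv_rhs => rw [← modByMonic_add_div Q (X ^ n), mul_add, coeff_add,
    coeff_mul_modByMonic_X_pow (by omega), zero_add, mul_left_comm, coeff_X_pow_mul]

theorem X_pow_mul_divByMonic_X_pow (P : A[X]) (n : ℕ) :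
    X ^ n * (P /ₘ X ^ n) = P - P %ₘ X ^ n :=
  eq_sub_of_add_eq' (modByMonic_add_div P (X ^ n))

theorem divByMonic_X_pow_mul_divByMonic_X_pow {F : A[X]} {n : ℕ} (hF : F.natDegree ≤ n)
    (q r : A[X]) :
    (F * q /ₘ X ^ n) * (F * r /ₘ X ^ n) =
      F * (q * (F * r /ₘ X ^ n) - (F * q %ₘ X ^ n) * r /ₘ X ^ n) /ₘ X ^ n := by
  set U := F * q %ₘ X ^ n
  have hUr : U * (F * r /ₘ X ^ n) /ₘ X ^ n = F * (U * r /ₘ X ^ n) /ₘ X ^ n := by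
    rw [mul_divByMonic_X_pow (natDegree_modByMonic_X_pow_le _ n), mul_divByMonic_X_pow hF,
      mul_left_comm]
  rw [← mul_divByMonic_cancel_left (_ * _) (monic_X_pow n), ← mul_assoc,
    X_pow_mul_divByMonic_X_pow, sub_mul, mul_sub, sub_divByMonic_X_pow, sub_divByMonic_X_pow,
    hUr, mul_assoc]

/-- The element `a + ⌊F q / Xⁿ⌋` of `A[X]`. For the polynomial `F` of a binary form of degree `n`,
its values at the root `θ` of `F` are the elements of the ring `R_F`. -/
def formElem (n : ℕ) (F : A[X]) (a : A) (q : A[X]) : A[X] :=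
  C a + F * q /ₘ X ^ n

/-- Multiplication by `formElem n F a q` on polynomials of degree less than `n`, corrected by a
multiple of `F` so that it preserves them. No division by `F` is involved, so `F` need not be
monic, nor of degree exactly `n`. -/
def formMap (n : ℕ) (F : A[X]) (a : A) (q P : A[X]) : A[X] :=
  formElem n F a q * P - F * (q * P /ₘ X ^ n)

/-- The matrix of `formMap n F a q` in the basis `1, X, …, X ^ (n - 1)`. -/
def formMatrix (n : ℕ) (F : A[X]) (a : A) (q : A[X]) : Matrix (Fin n) (Fin n) A :=
  .of fun i j => (formMap n F a q (X ^ (j : ℕ))).coeff i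

theorem formElem_map (φ : A →+* B) (n : ℕ) (F : A[X]) (a : A) (q : A[X]) :
    (formElem n F a q).map φ = formElem n (F.map φ) (φ a) (q.map φ) := by
  simp only [formElem, Polynomial.map_add, map_C, map_divByMonic_X_pow, Polynomial.map_mul]

theorem formMap_map (φ : A →+* B) (n : ℕ) (F : A[X]) (a : A) (q P : A[X]) :
    (formMap n F a q P).map φ = formMap n (F.map φ) (φ a) (q.map φ) (P.map φ) := by
  simp only [formMap, Polynomial.map_sub, Polynomial.map_mul, formElem_map, map_divByMonic_X_pow]

theorem formMatrix_map (φ : A →+* B) (n : ℕ) (F : A[X]) (a : A) (q : A[X]) :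
    (formMatrix n F a q).map φ = formMatrix n (F.map φ) (φ a) (q.map φ) := by
  ext i j
  simp only [formMatrix, Matrix.map_apply, of_apply, ← coeff_map, formMap_map, Polynomial.map_pow,
    map_X]

theorem map_det_formMatrix (φ : A →+* B) (n : ℕ) (F : A[X]) (a : A) (q : A[X]) :
    φ (formMatrix n F a q).det = (formMatrix n (F.map φ) (φ a) (q.map φ)).det := by
  rw [RingHom.map_det, RingHom.mapMatrix_apply, formMatrix_map]

theorem coeff_formMap {n i : ℕ} {F P : A[X]} (hF : F.natDegree ≤ i) (hP : P.natDegree ≤ i) (a : A)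
    (q : A[X]) : (formMap n F a q P).coeff i = a * P.coeff i := by
  have key : X ^ n * formMap n F a q P =
      X ^ n * (C a * P) + F * (q * P %ₘ X ^ n) - P * (F * q %ₘ X ^ n) := by
    rw [formMap, formElem]
    linear_combination P * X_pow_mul_divByMonic_X_pow (F * q) n -
      F * X_pow_mul_divByMonic_X_pow (q * P) n
  rw [← coeff_X_pow_mul _ n i, key, coeff_sub, coeff_add, coeff_X_pow_mul, coeff_C_mul,
    coeff_mul_modByMonic_X_pow hF, coeff_mul_modByMonic_X_pow hP, add_zero, sub_zero]

theorem degree_formMap_lt {n : ℕ} {F P : A[X]} (hF : F.natDegree ≤ n) (hP : P.degree < n) (a : A)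
    (q : A[X]) : (formMap n F a q P).degree < n := by
  refine (degree_lt_iff_coeff_zero _ _).2 fun i hi => ?_
  have hPi := (degree_lt_iff_coeff_zero _ _).1 hP
  rw [coeff_formMap (hF.trans hi) ((natDegree_le_of_degree_le hP.le).trans hi), hPi i hi, mul_zero]

theorem formMap_C_mul (n : ℕ) (F : A[X]) (a t : A) (q P : A[X]) :
    formMap n F a (C t * q) P = C a * P + C t * formMap n F 0 q P := by
  rw [formMap, formMap, formElem, formElem, mul_left_comm, mul_assoc, C_mul_divByMonic_X_pow,
    C_mul_divByMonic_X_pow, C_0]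
  ring

theorem formMatrix_C_mul (n : ℕ) (F : A[X]) (a t : A) (q : A[X]) :
    formMatrix n F a (C t * q) = a • 1 + t • formMatrix n F 0 q := by
  ext i j
  simp only [formMatrix, of_apply, formMap_C_mul n F a, coeff_add, coeff_C_mul, coeff_X_pow,
    Matrix.add_apply, Matrix.smul_apply, Matrix.one_apply, Fin.ext_iff, smul_eq_mul]

theorem det_formMatrix_zero (n : ℕ) (F : A[X]) (a : A) : (formMatrix n F a 0).det = a ^ n := by
  have h := formMatrix_C_mul n F a 0 0
  rw [C_0, zero_mul, zero_smul, add_zero] at h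
  rw [h, det_smul, det_one, mul_one, Fintype.card_fin]

theorem X_pow_divByMonic_X_pow (m n : ℕ) :
    (X ^ m /ₘ X ^ n : A[X]) = if n ≤ m then X ^ (m - n) else 0 := by
  ext i
  rw [coeff_divByMonic_X_pow, coeff_X_pow]
  split_ifs <;> simp only [coeff_X_pow, coeff_zero] <;> grind

theorem formMatrix_apply_self (F : A[X]) {n k : ℕ} (hk : k ≤ n) (i : Fin n) :
    formMatrix n F 0 (X ^ (n - k)) i i = if (i : ℕ) < k then F.coeff k else 0 := by
  have := i.2
  rw [formMatrix, of_apply, formMap, formElem, C_0, zero_add, coeff_sub, coeff_mul_X_pow',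
    ← pow_add, X_pow_divByMonic_X_pow, if_pos le_rfl, Nat.sub_self, coeff_divByMonic_X_pow,
    coeff_mul_X_pow', zero_add, if_pos (Nat.sub_le n k), Nat.sub_sub_self hk]
  split_ifs with h₁ h₂ h₂
  · omega
  · rw [coeff_mul_X_pow', if_pos (by omega), show (i : ℕ) - (n - k + i - n) = k by omega, sub_self]
  · rw [mul_zero, coeff_zero, sub_zero]
  · omega

theorem trace_formMatrix (F : A[X]) {n k : ℕ} (hk : k ≤ n) :
    (formMatrix n F 0 (X ^ (n - k))).trace = k * F.coeff k := by
  have hfilter : (Finset.range n).filter (· < k) = Finset.range k := by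
    ext i
    simp only [Finset.mem_filter, Finset.mem_range]
    omega
  simp only [Matrix.trace, diag_apply, formMatrix_apply_self F hk]
  rw [Fin.sum_univ_eq_sum_range (fun i => if i < k then F.coeff k else 0), ← Finset.sum_filter,
    hfilter, Finset.sum_const, nsmul_eq_mul, Finset.card_range]

theorem formElem_succ {n : ℕ} {F : A[X]} (hF : F.natDegree ≤ n) (a : A) (q : A[X]) :
    formElem (n + 1) F a q = formElem n F a (divX q) := by
  ext i
  have hFi : F.coeff (i + (n + 1)) = 0 := coeff_eq_zero_of_natDegree_lt (by omega)
  simp only [formElem, coeff_add, coeff_divByMonic_X_pow]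
  conv_lhs => rw [← X_mul_divX_add q, mul_add, coeff_add, coeff_mul_C, hFi, zero_mul, add_zero,
    mul_left_comm, ← add_assoc, coeff_X_mul]

theorem formMap_succ {n : ℕ} {F P : A[X]} (hF : F.natDegree ≤ n) (hP : P.natDegree ≤ n) (a : A)
    (q : A[X]) : formMap (n + 1) F a q P = formMap n F a (divX q) P := by
  have hq := formElem_succ hP 0 q
  simp only [formElem, C_0, zero_add] at hq
  rw [formMap, formMap, formElem_succ hF, mul_comm q, hq, mul_comm P]

theorem det_formMatrix_succ {n : ℕ} {F : A[X]} (hF : F.natDegree ≤ n) (a : A) (q : A[X]) :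
    (formMatrix (n + 1) F a q).det = a * (formMatrix n F a (divX q)).det := by
  have hlast (j : Fin (n + 1)) :
      formMatrix (n + 1) F a q (Fin.last n) j = if j = Fin.last n then a else 0 := by
    have hj : (X ^ (j : ℕ) : A[X]).natDegree ≤ n :=
      (natDegree_X_pow_le _).trans (Nat.lt_succ_iff.1 j.2)
    rw [formMatrix, of_apply, Fin.val_last, coeff_formMap hF hj, coeff_X_pow, mul_ite, mul_one,
      mul_zero]
    simp only [Fin.ext_iff, Fin.val_last, eq_comm]
  have hminor : (formMatrix (n + 1) F a q).submatrix (Fin.last n).succAbove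
      (Fin.last n).succAbove = formMatrix n F a (divX q) := by
    ext i j
    simp only [submatrix_apply, Fin.succAbove_last, formMatrix, of_apply, Fin.val_castSucc]
    rw [formMap_succ hF ((natDegree_X_pow_le _).trans j.2.le)]
  rw [det_succ_row _ (Fin.last n), Finset.sum_eq_single (Fin.last n), hlast, if_pos rfl, hminor,
    Fin.val_last, Even.neg_one_pow ⟨n, rfl⟩, one_mul]
  · intro j _ hj
    rw [hlast, if_neg hj, mul_zero, zero_mul]
  · exact fun h => absurd (Finset.mem_univ _) h

end FormElem

section Norm

variable {k : Type*} [Field k]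

theorem det_eq_det_mul_det_of_exact {M₁ M₂ M₃ : Type*} [AddCommGroup M₁] [AddCommGroup M₂]
    [AddCommGroup M₃] [Module k M₁] [Module k M₂] [Module k M₃] [Module.Finite k M₂]
    {i : M₁ →ₗ[k] M₂} {π : M₂ →ₗ[k] M₃} (hi : Function.Injective i) (hπ : Function.Surjective π)
    (hex : Function.Exact i π) {e₁ : M₁ →ₗ[k] M₁} {e₂ : M₂ →ₗ[k] M₂} {e₃ : M₃ →ₗ[k] M₃}
    (h₁ : ∀ x, e₂ (i x) = i (e₁ x)) (h₃ : ∀ y, π (e₂ y) = e₃ (π y)) :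
    LinearMap.det e₂ = LinearMap.det e₁ * LinearMap.det e₃ := by
  have hker : LinearMap.range i = LinearMap.ker π := (LinearMap.exact_iff.1 hex).symm
  have hstable : LinearMap.ker π ≤ (LinearMap.ker π).comap e₂ := fun y hy => by
    rw [Submodule.mem_comap, LinearMap.mem_ker, h₃, LinearMap.mem_ker.1 hy, map_zero]
  let eker : M₁ ≃ₗ[k] LinearMap.ker π := (LinearEquiv.ofInjective i hi).trans (.ofEq _ _ hker)
  let equot : (M₂ ⧸ LinearMap.ker π) ≃ₗ[k] M₃ := π.quotKerEquivOfSurjective hπ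
  rw [LinearMap.det_eq_det_mul_det (LinearMap.ker π) e₂ hstable, ← LinearMap.det_conj e₁ eker,
    ← LinearMap.det_conj (Submodule.mapQ _ _ _ _) equot]
  congr 2
  · ext x
    obtain ⟨x, rfl⟩ := eker.surjective x
    simp only [LinearMap.comp_apply, LinearEquiv.coe_coe, LinearEquiv.symm_apply_apply]
    exact h₁ x
  · refine LinearMap.ext fun x => ?_
    obtain ⟨x, rfl⟩ := equot.surjective x
    obtain ⟨x, rfl⟩ := Submodule.Quotient.mk_surjective _ x
    simp only [LinearMap.comp_apply, LinearEquiv.coe_coe, LinearEquiv.symm_apply_apply]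
    exact h₃ x

/-- Multiplication by `g` as a map `k[X]/(f) → k[X]/(f g)`, the kernel of the reduction
`k[X]/(f g) → k[X]/(g)`. -/
def mulLeftMap (f g : k[X]) : AdjoinRoot f →ₗ[k] AdjoinRoot (f * g) :=
  ((Ideal.span {f}).restrictScalars k).mapQ ((Ideal.span {f * g}).restrictScalars k)
    (LinearMap.mulLeft k g) fun P hP => by
      obtain ⟨Q, rfl⟩ := Ideal.mem_span_singleton.1 hP
      exact Ideal.mem_span_singleton.2 ⟨Q, by rw [LinearMap.mulLeft_apply]; ring⟩

theorem mulLeftMap_mk (f g P : k[X]) :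
    mulLeftMap f g (AdjoinRoot.mk f P) = AdjoinRoot.mk (f * g) (g * P) := rfl

theorem mulLeftMap_injective (f : k[X]) {g : k[X]} (hg : g ≠ 0) :
    Function.Injective (mulLeftMap f g) := by
  refine (injective_iff_map_eq_zero _).2 fun x hx => ?_
  obtain ⟨P, rfl⟩ := AdjoinRoot.mk_surjective x
  rwa [mulLeftMap_mk, AdjoinRoot.mk_eq_zero, mul_comm f g, mul_dvd_mul_iff_left hg,
    ← AdjoinRoot.mk_eq_zero] at hx

theorem algHomOfDvd_mk {f g : k[X]} (h : g ∣ f) (P : k[X]) :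
    AdjoinRoot.algHomOfDvd k f g h (AdjoinRoot.mk f P) = AdjoinRoot.mk g P := by
  rw [← AdjoinRoot.aeval_eq, ← aeval_algHom_apply, AdjoinRoot.algHomOfDvd_root,
    AdjoinRoot.aeval_eq]

theorem exact_mulLeftMap_algHomOfDvd (f g : k[X]) :
    Function.Exact (mulLeftMap f g) (AdjoinRoot.algHomOfDvd k (f * g) g (dvd_mul_left g f)) := by
  intro y
  obtain ⟨Q, rfl⟩ := AdjoinRoot.mk_surjective y
  rw [algHomOfDvd_mk, AdjoinRoot.mk_eq_zero]
  constructor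
  · rintro ⟨P, rfl⟩
    exact ⟨AdjoinRoot.mk f P, mulLeftMap_mk f g P⟩
  · rintro ⟨x, hx⟩
    obtain ⟨P, rfl⟩ := AdjoinRoot.mk_surjective x
    rw [mulLeftMap_mk, AdjoinRoot.mk_eq_mk] at hx
    exact (dvd_sub_right (dvd_mul_right g P)).1 ((dvd_mul_left g f).trans hx)

theorem norm_mk_mul {f g : k[X]} (hf : f ≠ 0) (hg : g ≠ 0) (P : k[X]) :
    Algebra.norm k (AdjoinRoot.mk (f * g) P) =
      Algebra.norm k (AdjoinRoot.mk f P) * Algebra.norm k (AdjoinRoot.mk g P) := by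
  have : Module.Finite k (AdjoinRoot (f * g)) := (AdjoinRoot.powerBasis (mul_ne_zero hf hg)).finite
  have hdvd : g ∣ f * g := dvd_mul_left g f
  simp only [Algebra.norm_apply]
  refine det_eq_det_mul_det_of_exact (i := mulLeftMap f g)
    (π := (AdjoinRoot.algHomOfDvd k (f * g) g hdvd).toLinearMap) (mulLeftMap_injective f hg)
    (fun y => ?_) (exact_mulLeftMap_algHomOfDvd f g) (fun x => ?_) fun y => ?_
  · obtain ⟨Q, rfl⟩ := AdjoinRoot.mk_surjective y
    exact ⟨AdjoinRoot.mk _ Q, algHomOfDvd_mk hdvd Q⟩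
  · obtain ⟨Q, rfl⟩ := AdjoinRoot.mk_surjective x
    simp only [Algebra.coe_lmul_eq_mul, LinearMap.mul_apply', mulLeftMap_mk, ← map_mul,
      mul_left_comm P]
  · simp only [Algebra.coe_lmul_eq_mul, LinearMap.mul_apply', AlgHom.toLinearMap_apply, map_mul,
      algHomOfDvd_mk]

theorem norm_mk_of_isUnit {f : k[X]} (hf : IsUnit f) (P : k[X]) :
    Algebra.norm k (AdjoinRoot.mk f P) = 1 := by
  have : Subsingleton (AdjoinRoot f) :=
    Ideal.Quotient.subsingleton_iff.2 (Ideal.span_singleton_eq_top.2 hf)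
  rw [Algebra.norm_apply, LinearMap.det_eq_one_of_subsingleton]

theorem norm_mk_pow {f : k[X]} (hf : f ≠ 0) (e : ℕ) (P : k[X]) :
    Algebra.norm k (AdjoinRoot.mk (f ^ e) P) = Algebra.norm k (AdjoinRoot.mk f P) ^ e := by
  induction e with
  | zero => rw [norm_mk_of_isUnit (by rw [pow_zero]; exact isUnit_one), pow_zero]
  | succ e ih => rw [pow_succ, norm_mk_mul (pow_ne_zero e hf) hf, ih, pow_succ]

theorem powerBasisAux_apply {F : k[X]} (hF : F ≠ 0) (i : Fin F.natDegree) :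
    AdjoinRoot.powerBasisAux hF i = AdjoinRoot.mk F (X ^ (i : ℕ)) := by
  rw [map_pow, AdjoinRoot.mk_X]
  exact (AdjoinRoot.powerBasis hF).basis_eq_pow i

theorem powerBasisAux_repr_mk {F : k[X]} (hF : F ≠ 0) {P : k[X]} (hP : P.degree < F.natDegree)
    (i : Fin F.natDegree) :
    (AdjoinRoot.powerBasisAux hF).repr (AdjoinRoot.mk F P) i = P.coeff i := by
  have hmk : AdjoinRoot.mk F P =
      ∑ j : Fin F.natDegree, P.coeff j • AdjoinRoot.powerBasisAux hF j := by
    conv_lhs => rw [← P.sum_monomial_eq, ← sum_fin _ monomial_zero_right hP, map_sum]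
    refine Finset.sum_congr rfl fun j _ => ?_
    rw [powerBasisAux_apply, ← C_mul_X_pow_eq_monomial, map_mul, AdjoinRoot.mk_C, Algebra.smul_def,
      AdjoinRoot.algebraMap_eq]
  rw [hmk, Module.Basis.repr_sum_self]

theorem leftMulMatrix_mk_formElem {F : k[X]} (hF : F ≠ 0) (a : k) (q : k[X]) :
    Algebra.leftMulMatrix (AdjoinRoot.powerBasisAux hF)
      (AdjoinRoot.mk F (formElem F.natDegree F a q)) = formMatrix F.natDegree F a q := by
  ext i j
  have hmk : AdjoinRoot.mk F (formElem F.natDegree F a q * X ^ (j : ℕ)) =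
      AdjoinRoot.mk F (formMap F.natDegree F a q (X ^ (j : ℕ))) :=
    AdjoinRoot.mk_eq_mk.2 ⟨_, by rw [formMap, sub_sub_cancel]⟩
  have hX : (X ^ (j : ℕ) : k[X]).degree < F.natDegree := by
    rw [degree_X_pow]
    exact_mod_cast j.2
  rw [Algebra.leftMulMatrix_eq_repr_mul, powerBasisAux_apply, ← map_mul, hmk,
    powerBasisAux_repr_mk hF (degree_formMap_lt le_rfl hX a q), formMatrix, of_apply]

theorem aeval_charpoly_formMatrix_mk {F : k[X]} (hF : F ≠ 0) {n : ℕ} (hn : F.natDegree = n) (a : k)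
    (q : k[X]) :
    aeval (AdjoinRoot.mk F (formElem n F a q)) (formMatrix n F a q).charpoly = 0 := by
  subst hn
  refine Algebra.leftMulMatrix_injective (AdjoinRoot.powerBasisAux hF) ?_
  rw [← aeval_algHom_apply, leftMulMatrix_mk_formElem, aeval_self_charpoly, map_zero]

theorem det_formMatrix_natDegree {F : k[X]} (hF : F ≠ 0) (a : k) (q : k[X]) :
    (formMatrix F.natDegree F a q).det =
      Algebra.norm k (AdjoinRoot.mk F (formElem F.natDegree F a q)) := by
  rw [Algebra.norm_eq_matrix_det (AdjoinRoot.powerBasisAux hF), leftMulMatrix_mk_formElem]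

theorem det_formMatrix {F : k[X]} (hF : F ≠ 0) {n : ℕ} (hn : F.natDegree ≤ n) (a : k) (q : k[X]) :
    (formMatrix n F a q).det =
      a ^ (n - F.natDegree) * Algebra.norm k (AdjoinRoot.mk F (formElem n F a q)) := by
  induction n, hn using Nat.le_induction generalizing q with
  | base => rw [det_formMatrix_natDegree hF, Nat.sub_self, pow_zero, one_mul]
  | succ n hn ih =>
    rw [det_formMatrix_succ hn, ih, formElem_succ hn, Nat.succ_sub hn, pow_succ', mul_assoc]

end Norm

section FormPoly

variable {A : Type*} [CommRing A]

/-- The polynomial `F(x, 1)` over the base ring of the binary form of degree `n` with coefficients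
`c`, indexed as in `binPoly`: the coefficient of `x ^ (n - i)` is `c i`. -/
def formPoly (n : ℕ) (c : ℕ → A) : A[X] :=
  ∑ i ∈ Finset.range (n + 1), C (c i) * X ^ (n - i)

theorem coeff_formPoly (n : ℕ) (c : ℕ → A) (j : ℕ) :
    (formPoly n c).coeff j = if j ≤ n then c (n - j) else 0 := by
  simp only [formPoly, finsetSum_coeff, coeff_C_mul, coeff_X_pow]
  split_ifs with h
  · rw [Finset.sum_eq_single_of_mem (n - j) (Finset.mem_range.2 (by omega)), if_pos (by omega),
      mul_one]
    intro i hi hij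
    rw [if_neg (by rw [Finset.mem_range] at hi; omega), mul_zero]
  · exact Finset.sum_eq_zero fun i _ => by rw [if_neg (by omega), mul_zero]

theorem natDegree_formPoly_le (n : ℕ) (c : ℕ → A) : (formPoly n c).natDegree ≤ n :=
  natDegree_le_iff_coeff_eq_zero.2 fun j hj => by rw [coeff_formPoly, if_neg (by omega)]

theorem map_formPoly {B : Type*} [CommRing B] (φ : A →+* B) (n : ℕ) (c : ℕ → A) :
    (formPoly n c).map φ = formPoly n (φ ∘ c) := by
  simp only [formPoly, Polynomial.map_sum, Polynomial.map_mul, map_C, Polynomial.map_pow, map_X,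
    Function.comp_apply]

theorem formPoly_mul_X_pow_divByMonic {i n : ℕ} (hi : i ≤ n) (c : ℕ → A) :
    formPoly n c * X ^ i /ₘ X ^ n = formPoly i c := by
  ext j
  rw [coeff_divByMonic_X_pow, coeff_mul_X_pow', if_pos (by omega), coeff_formPoly, coeff_formPoly]
  by_cases hj : j ≤ i
  · rw [if_pos (by omega), if_pos hj, show n - (j + n - i) = i - j by omega]
  · rw [if_neg (by omega), if_neg hj]

/-- The polynomials `formElem n F a q`, a subring of `A[X]` since `F` has degree at most `n`. -/
def formOrder (n : ℕ) (F : A[X]) (hF : F.natDegree ≤ n) : Subalgebra A A[X] where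
  carrier := {P | ∃ a q, P = formElem n F a q}
  algebraMap_mem' a := ⟨a, 0, by
    rw [formElem, mul_zero, zero_divByMonic, add_zero, algebraMap_eq]⟩
  add_mem' := by
    rintro _ _ ⟨a, q, rfl⟩ ⟨b, r, rfl⟩
    exact ⟨a + b, q + r, by rw [formElem, formElem, formElem, mul_add, add_divByMonic_X_pow, C_add,
      add_add_add_comm]⟩
  mul_mem' := by
    rintro _ _ ⟨a, q, rfl⟩ ⟨b, r, rfl⟩
    refine ⟨a * b, C a * r + C b * q +
      (q * (F * r /ₘ X ^ n) - (F * q %ₘ X ^ n) * r /ₘ X ^ n), ?_⟩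
    simp only [formElem, mul_add, add_divByMonic_X_pow,
      ← divByMonic_X_pow_mul_divByMonic_X_pow hF, mul_left_comm F, C_mul_divByMonic_X_pow, C_mul]
    ring

end FormPoly

section FormRing

variable {A L : Type} [CommRing A] [Field L] [Algebra A L]

theorem binPoly_eq_map_formPoly (n : ℕ) (c : ℕ → A) :
    binPoly A L n c = (formPoly n c).map (algebraMap A L) := by
  rw [map_formPoly]
  rfl

theorem aeval_θF (n : ℕ) (c : ℕ → A) (P : A[X]) :
    aeval (θF A L n c) P = AdjoinRoot.mk (binPoly A L n c) (P.map (algebraMap A L)) := by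
  rw [← AdjoinRoot.aeval_eq, aeval_map_algebraMap, θF]

theorem aeval_θF_formPoly_self (n : ℕ) (c : ℕ → A) : aeval (θF A L n c) (formPoly n c) = 0 := by
  rw [aeval_θF, ← binPoly_eq_map_formPoly, AdjoinRoot.mk_self]

theorem aeval_θF_formPoly (n m : ℕ) (c : ℕ → A) :
    aeval (θF A L n c) (formPoly m c) = ζF A L n c m + algebraMap A _ (c m) := by
  simp only [formPoly, Finset.sum_range_succ, map_add, map_sum, map_mul, map_pow, aeval_C, aeval_X,
    ζF, Nat.sub_self, pow_zero, mul_one]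

theorem algebraMap_mem_RFmod (n : ℕ) (c : ℕ → A) (a : A) :
    algebraMap A (KF A L n c) a ∈ RFmod A L n c := by
  rw [Algebra.algebraMap_eq_smul_one]
  exact Submodule.smul_mem _ _ (Submodule.subset_span (.inl rfl))

theorem ζF_mem_RFmod {i n : ℕ} (hi : i < n) (c : ℕ → A) : ζF A L n c i ∈ RFmod A L n c := by
  rcases Nat.eq_zero_or_pos i with rfl | hpos
  · rw [ζF, Finset.sum_range_zero]
    exact zero_mem _
  · exact Submodule.subset_span (.inr ⟨i, hpos, by omega, rfl⟩)

theorem aeval_formPoly_mul_divByMonic_mem_RFmod (n : ℕ) (c : ℕ → A) (q : A[X]) :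
    aeval (θF A L n c) (formPoly n c * q /ₘ X ^ n) ∈ RFmod A L n c := by
  induction q using Polynomial.induction_on' with
  | add q r hq hr =>
    rw [mul_add, add_divByMonic_X_pow, map_add]
    exact add_mem hq hr
  | monomial i a =>
    rw [← C_mul_X_pow_eq_monomial, mul_left_comm, C_mul_divByMonic_X_pow, ← smul_eq_C_mul, map_smul]
    refine Submodule.smul_mem _ _ ?_
    rcases lt_or_ge i n with hi | hi
    · rw [formPoly_mul_X_pow_divByMonic hi.le, aeval_θF_formPoly]
      exact add_mem (ζF_mem_RFmod hi c) (algebraMap_mem_RFmod n c _)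
    · rw [← Nat.add_sub_of_le hi, pow_add, mul_left_comm,
        mul_divByMonic_cancel_left _ (monic_X_pow n), map_mul, aeval_θF_formPoly_self, zero_mul]
      exact zero_mem _

theorem RFmod_eq_map_formOrder (n : ℕ) (c : ℕ → A) :
    RFmod A L n c = Subalgebra.toSubmodule
      ((formOrder n (formPoly n c) (natDegree_formPoly_le n c)).map (aeval (θF A L n c))) := by
  refine le_antisymm (Submodule.span_le.2 ?_) ?_
  · rintro _ (rfl | ⟨i, -, hi, rfl⟩)
    · exact one_mem ((formOrder n (formPoly n c) _).map (aeval (θF A L n c)))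
    · refine ⟨_, ⟨-c i, X ^ i, rfl⟩, ?_⟩
      rw [RingHom.coe_coe, formElem, formPoly_mul_X_pow_divByMonic (hi.trans (Nat.sub_le n 1)),
        map_add, aeval_C, aeval_θF_formPoly, map_neg]
      ring
  · rintro _ ⟨_, ⟨a, q, rfl⟩, rfl⟩
    rw [RingHom.coe_coe, formElem, map_add, aeval_C]
    exact add_mem (algebraMap_mem_RFmod n c a) (aeval_formPoly_mul_divByMonic_mem_RFmod n c q)

theorem aeval_formElem_mem_RFmod (n : ℕ) (c : ℕ → A) (a : A) (q : A[X]) :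
    aeval (θF A L n c) (formElem n (formPoly n c) a q) ∈ RFmod A L n c := by
  rw [RFmod_eq_map_formOrder]
  exact ⟨_, ⟨a, q, rfl⟩, rfl⟩

theorem exists_eq_aeval_formElem {n : ℕ} {c : ℕ → A} {ρ : KF A L n c} (hρ : ρ ∈ RFmod A L n c) :
    ∃ a q, ρ = aeval (θF A L n c) (formElem n (formPoly n c) a q) := by
  rw [RFmod_eq_map_formOrder] at hρ
  obtain ⟨_, ⟨a, q, rfl⟩, rfl⟩ := hρ
  exact ⟨a, q, rfl⟩

theorem aeval_mem_RFmod {n : ℕ} {c : ℕ → A} {ρ : KF A L n c} (hρ : ρ ∈ RFmod A L n c) (Q : A[X]) :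
    aeval ρ Q ∈ RFmod A L n c := by
  rw [RFmod_eq_map_formOrder] at hρ ⊢
  exact Algebra.adjoin_le (Set.singleton_subset_iff.2 hρ) (aeval_mem_adjoin_singleton A ρ)

theorem exists_mul_aeval_eq_one {S : Type*} [CommRing S] [Algebra A S] {x : S} {P : A[X]}
    (h₀ : IsUnit (P.coeff 0)) (hP : aeval x P = 0) : ∃ Q : A[X], x * aeval x Q = 1 := by
  obtain ⟨v, hv⟩ := h₀.exists_right_inv
  refine ⟨-(C v * divX P), ?_⟩
  rw [← X_mul_divX_add P, map_add, map_mul, aeval_X, aeval_C] at hP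
  have hv' : algebraMap A S (P.coeff 0) * algebraMap A S v = 1 := by rw [← map_mul, hv, map_one]
  rw [map_neg, map_mul, aeval_C]
  linear_combination -algebraMap A S v * hP + hv'

variable [FaithfulSMul A L]

theorem coeff_binPoly_ne_zero {c : ℕ → A} (hc : c 0 ≠ 0) (n : ℕ) :
    (binPoly A L n c).coeff n ≠ 0 := by
  rw [binPoly_eq_map_formPoly, coeff_map, coeff_formPoly, if_pos le_rfl, Nat.sub_self]
  exact (map_ne_zero_iff _ (FaithfulSMul.algebraMap_injective A L)).2 hc

theorem binPoly_ne_zero {c : ℕ → A} (hc : c 0 ≠ 0) (n : ℕ) : binPoly A L n c ≠ 0 := fun h =>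
  coeff_binPoly_ne_zero (L := L) hc n (by rw [h, coeff_zero])

theorem natDegree_binPoly {c : ℕ → A} (hc : c 0 ≠ 0) (n : ℕ) :
    (binPoly A L n c).natDegree = n := by
  refine natDegree_eq_of_le_of_coeff_ne_zero ?_ (coeff_binPoly_ne_zero hc n)
  rw [binPoly_eq_map_formPoly]
  exact natDegree_map_le.trans (natDegree_formPoly_le n c)

theorem norm_aeval_formElem {c : ℕ → A} (hc : c 0 ≠ 0) (n : ℕ) (a : A) (q : A[X]) :
    Algebra.norm L (aeval (θF A L n c) (formElem n (formPoly n c) a q)) =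
      algebraMap A L (formMatrix n (formPoly n c) a q).det := by
  rw [aeval_θF, map_det_formMatrix, formElem_map, ← binPoly_eq_map_formPoly,
    det_formMatrix (binPoly_ne_zero hc n) (natDegree_binPoly hc n).le, natDegree_binPoly hc,
    Nat.sub_self, pow_zero, one_mul]

theorem aeval_charpoly_formMatrix {c : ℕ → A} (hc : c 0 ≠ 0) (n : ℕ) (a : A) (q : A[X]) :
    aeval (aeval (θF A L n c) (formElem n (formPoly n c) a q))
      (formMatrix n (formPoly n c) a q).charpoly = 0 := by
  rw [← aeval_map_algebraMap L, ← charpoly_map, formMatrix_map, aeval_θF, formElem_map,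
    ← binPoly_eq_map_formPoly]
  exact aeval_charpoly_formMatrix_mk (binPoly_ne_zero hc n) (natDegree_binPoly hc n) _ _

theorem isUnitRF_of_isUnit_det {c : ℕ → A} (hc : c 0 ≠ 0) {n : ℕ} {a : A} {q : A[X]}
    (h : IsUnit (formMatrix n (formPoly n c) a q).det) :
    IsUnitRF A L n c (aeval (θF A L n c) (formElem n (formPoly n c) a q)) := by
  rw [det_eq_sign_charpoly_coeff] at h
  obtain ⟨Q, hQ⟩ := exists_mul_aeval_eq_one (isUnit_of_mul_isUnit_right h)
    (aeval_charpoly_formMatrix (L := L) hc n a q)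
  have hmem := aeval_formElem_mem_RFmod (L := L) n c a q
  exact ⟨hmem, _, aeval_mem_RFmod hmem Q, hQ⟩

end FormRing

section OddFactor

variable {M : Type*} [CommMonoidWithZero M]

theorem exists_squarefree_mul_sq [IsCancelMulZero M] [WfDvdMonoid M] {a : M} (ha : a ≠ 0) :
    ∃ s x, Squarefree s ∧ a = s * x ^ 2 := by
  induction a using (wellFounded_dvdNotUnit (α := M)).induction with
  | _ a ih =>
  by_cases hsq : Squarefree a
  · exact ⟨a, 1, hsq, by rw [one_pow, mul_one]⟩
  obtain ⟨y, ⟨b, rfl⟩, hy⟩ : ∃ y, y * y ∣ a ∧ ¬IsUnit y := by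
    simpa only [Squarefree, not_forall, exists_prop] using hsq
  have hb : b ≠ 0 := right_ne_zero_of_mul ha
  obtain ⟨s, x, hs, rfl⟩ :=
    ih b ⟨hb, y * y, fun h => hy (isUnit_of_mul_isUnit_left h), mul_comm _ _⟩ hb
  exact ⟨s, y * x, hs, by rw [mul_pow, pow_two y]; ac_rfl⟩

theorem associated_sq_or_exists_odd_pow_mul [UniqueFactorizationMonoid M] {a : M} (ha : a ≠ 0) :
    (∃ x, Associated (x ^ 2) a) ∨
      ∃ π e b, Irreducible π ∧ Odd e ∧ a = π ^ e * b ∧ ¬π ∣ b := by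
  obtain ⟨s, x, hs, rfl⟩ := exists_squarefree_mul_sq ha
  by_cases hu : IsUnit s
  · exact .inl ⟨x, associated_unit_mul_right _ _ hu⟩
  obtain ⟨π, hπ, t, rfl⟩ := WfDvdMonoid.exists_irreducible_factor hu (left_ne_zero_of_mul ha)
  have hx : x ≠ 0 := fun h => ha (by rw [h, zero_pow two_ne_zero, mul_zero])
  obtain ⟨m, y, rfl, hy⟩ : ∃ m y, x = π ^ m * y ∧ ¬π ∣ y :=
    ⟨_, (FiniteMultiplicity.of_not_isUnit hπ.not_isUnit hx).exists_eq_pow_mul_and_not_dvd⟩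
  have ht : ¬π ∣ t := fun h => hπ.not_isUnit (hs π (mul_dvd_mul_left π h))
  refine .inr ⟨π, 2 * m + 1, t * y ^ 2, hπ, ⟨m, rfl⟩, ?_, ?_⟩
  · rw [mul_pow, ← pow_mul, mul_comm m, pow_succ' π, mul_mul_mul_comm]
  · exact fun h => (hπ.prime.dvd_or_dvd h).elim ht fun h => hy (hπ.prime.dvd_of_dvd_pow h)

end OddFactor

section FiniteField

variable {k : Type*} [Field k]

theorem isSquare_det_formMatrix {n : ℕ} (hn : Even n) {h : k[X]} {κ : k} (hκ : κ ≠ 0) (hh : h ≠ 0)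
    (hd : (C κ * h ^ 2).natDegree ≤ n) (a : k) (q : k[X]) :
    IsSquare (formMatrix n (C κ * h ^ 2) a q).det := by
  have hC : C κ ≠ 0 := C_ne_zero.2 hκ
  have heven : Even (n - (C κ * h ^ 2).natDegree) := by
    rw [natDegree_C_mul hκ, natDegree_pow]
    exact hn.tsub (even_two_mul _)
  rw [det_formMatrix (mul_ne_zero hC (pow_ne_zero 2 hh)) hd, norm_mk_mul hC (pow_ne_zero 2 hh),
    norm_mk_of_isUnit (isUnit_C.2 hκ.isUnit), one_mul, norm_mk_pow hh]
  exact (heven.isSquare_pow _).mul (IsSquare.sq _)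

theorem exists_formElem_one_eq {n e : ℕ} {g h : k[X]} (hg : g ≠ 0) (hh : h ≠ 0)
    (hd : (g ^ e * h).natDegree ≤ n) (b : k[X]) :
    ∃ q, formElem n (g ^ e * h) 1 q = 1 + h * b := by
  refine ⟨X ^ n * b / g ^ e, ?_⟩
  set r := X ^ n * b % g ^ e
  have hdiv : g ^ e * h * (X ^ n * b / g ^ e) = X ^ n * (h * b) - h * r := by
    linear_combination h * EuclideanDomain.div_add_mod (X ^ n * b) (g ^ e)
  have hrem : h * r /ₘ X ^ n = 0 := by
    rw [divByMonic_eq_zero_iff (monic_X_pow n), degree_X_pow, degree_mul, add_comm]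
    calc r.degree + h.degree < (g ^ e).degree + h.degree :=
          WithBot.add_lt_add_right (degree_ne_bot.2 hh) (degree_mod_lt _ (pow_ne_zero e hg))
      _ = (g ^ e * h).degree := degree_mul.symm
      _ ≤ n := degree_le_of_natDegree_le hd
  rw [formElem, C_1, hdiv, sub_divByMonic_X_pow, mul_divByMonic_cancel_left _ (monic_X_pow n), hrem,
    sub_zero]

theorem exists_norm_mk_one_add_mul_eq [Finite k] {g h : k[X]} (hg : Irreducible g) (hgh : ¬g ∣ h)
    (v : k) : ∃ b, Algebra.norm k (AdjoinRoot.mk g (1 + h * b)) = v := by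
  have : Fact (Irreducible g) := ⟨hg⟩
  have : Module.Finite k (AdjoinRoot g) := (AdjoinRoot.powerBasis hg.ne_zero).finite
  have : Finite (AdjoinRoot g) := Module.finite_of_finite k
  obtain ⟨x, rfl⟩ := FiniteField.norm_surjective k (AdjoinRoot g) v
  have hh : AdjoinRoot.mk g h ≠ 0 := by rwa [Ne, AdjoinRoot.mk_eq_zero]
  obtain ⟨b, hb⟩ := AdjoinRoot.mk_surjective ((x - 1) / AdjoinRoot.mk g h)
  exact ⟨b, by rw [map_add, map_mul, hb, map_one, mul_div_cancel₀ _ hh, add_sub_cancel]⟩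

theorem exists_det_formMatrix_eq_pow [Finite k] {n e : ℕ} {g h : k[X]} (hg : Irreducible g)
    (hgh : ¬g ∣ h) (hd : (g ^ e * h).natDegree ≤ n) (v : k) :
    ∃ q, (formMatrix n (g ^ e * h) 1 q).det = v ^ e := by
  obtain ⟨b, hb⟩ := exists_norm_mk_one_add_mul_eq hg hgh v
  have hge : g ^ e ≠ 0 := pow_ne_zero e hg.ne_zero
  have hh : h ≠ 0 := fun h0 => hgh (h0 ▸ dvd_zero g)
  obtain ⟨q, hq⟩ := exists_formElem_one_eq hg.ne_zero hh hd b
  have hone : AdjoinRoot.mk h (1 + h * b) = 1 := by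
    rw [map_add, map_mul, AdjoinRoot.mk_self, zero_mul, add_zero, map_one]
  exact ⟨q, by rw [det_formMatrix (mul_ne_zero hge hh) hd, one_pow, one_mul, hq, norm_mk_mul hge hh,
    norm_mk_pow hg.ne_zero, hb, hone, map_one, mul_one]⟩

theorem eq_C_mul_sq_or_forall_exists_det_formMatrix_eq [Finite k] {f : k[X]} {n : ℕ}
    (hd : f.natDegree ≤ n) :
    (∃ κ h, κ ≠ 0 ∧ f = C κ * h ^ 2) ∨
      ∀ v, v ≠ 0 → ∃ q y, y ≠ 0 ∧ (formMatrix n f 1 q).det = v * y ^ 2 := by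
  rcases eq_or_ne f 0 with rfl | hf
  · exact .inl ⟨1, 0, one_ne_zero, by rw [zero_pow two_ne_zero, mul_zero]⟩
  rcases associated_sq_or_exists_odd_pow_mul hf with ⟨h, κ, hκ⟩ | ⟨g, e, h, hg, ⟨m, rfl⟩, rfl, hgh⟩
  · obtain ⟨κ', hκ', hC⟩ := Polynomial.isUnit_iff.1 κ.isUnit
    exact .inl ⟨κ', h, hκ'.ne_zero, by rw [← hκ, hC, mul_comm]⟩
  · refine .inr fun v hv => ?_
    obtain ⟨q, hq⟩ := exists_det_formMatrix_eq_pow hg hgh hd v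
    exact ⟨q, v ^ m, pow_ne_zero m hv, by rw [hq]; ring⟩

end FiniteField

section Padic

variable {p : ℕ} [Fact p.Prime]

theorem isUnit_iff_toZMod_ne_zero (x : ℤ_[p]) : IsUnit x ↔ PadicInt.toZMod x ≠ 0 := by
  rw [← isUnit_map_iff PadicInt.toZMod, isUnit_iff_ne_zero]

theorem toZMod_eq_zero_iff_norm_lt_one (x : ℤ_[p]) : PadicInt.toZMod x = 0 ↔ ‖x‖ < 1 := by
  rw [← PadicInt.mem_nonunits, mem_nonunits_iff, isUnit_iff_toZMod_ne_zero, not_not]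

theorem exists_root_of_simple_root_toZMod {f : ℤ_[p][X]} {x : ℤ_[p]}
    (h₀ : PadicInt.toZMod (f.eval x) = 0) (h₁ : PadicInt.toZMod (f.derivative.eval x) ≠ 0) :
    ∃ z, PadicInt.toZMod z = PadicInt.toZMod x ∧ f.eval z = 0 := by
  have hunit := PadicInt.isUnit_iff.1 ((isUnit_iff_toZMod_ne_zero _).2 h₁)
  rw [toZMod_eq_zero_iff_norm_lt_one] at h₀
  obtain ⟨z, hz, hzx, -⟩ := hensels_lemma (R := ℤ_[p]) (F := f) (a := x) (by
    rwa [coe_aeval_eq_eval, hunit, one_pow])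
  rw [coe_aeval_eq_eval, hunit, ← toZMod_eq_zero_iff_norm_lt_one, map_sub, sub_eq_zero] at hzx
  exact ⟨z, hzx, by rwa [coe_aeval_eq_eval] at hz⟩

theorem exists_eq_mul_sq_of_toZMod_eq (hp : 2 < p) {d : ℤ_[p]} {u : ℤ_[p]ˣ} {y : ZMod p}
    (hy : y ≠ 0) (h : PadicInt.toZMod d = PadicInt.toZMod (u : ℤ_[p]) * y ^ 2) :
    ∃ w : ℤ_[p]ˣ, d = u * (w : ℤ_[p]) ^ 2 := by
  have : Fact (2 < p) := ⟨hp⟩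
  have h2 : (2 : ZMod p) ≠ 0 := Ring.two_ne_zero (by rw [ZMod.ringChar_zmod_n]; exact hp.ne')
  have hu := (isUnit_iff_toZMod_ne_zero (u : ℤ_[p])).1 u.isUnit
  obtain ⟨x, rfl⟩ := ZMod.ringHom_surjective PadicInt.toZMod y
  obtain ⟨z, hzx, hz⟩ := exists_root_of_simple_root_toZMod
    (f := C (u : ℤ_[p]) * X ^ 2 - C d) (x := x)
    (by simp only [eval_sub, eval_mul, eval_C, eval_pow, eval_X, map_sub, map_mul, map_pow, h,
      sub_self])
    (by
      simp only [derivative_sub, derivative_C_mul, derivative_X_sq, derivative_C, sub_zero,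
        eval_mul, eval_C, eval_X, eval_ofNat, map_mul, map_ofNat]
      exact mul_ne_zero hu (mul_ne_zero h2 hy))
  have hzu : IsUnit z := (isUnit_iff_toZMod_ne_zero z).2 (hzx ▸ hy)
  simp only [eval_sub, eval_mul, eval_C, eval_pow, eval_X] at hz
  exact ⟨hzu.unit, (sub_eq_zero.1 hz).symm⟩

theorem exists_det_one_add_smul_eq {m : Type*} [Fintype m] [DecidableEq m] {M : Matrix m m ℤ_[p]}
    (hM : IsUnit M.trace) {u : ℤ_[p]} (hu : PadicInt.toZMod u = 1) :
    ∃ t : ℤ_[p], (1 + t • M).det = u := by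
  have heval (t : ℤ_[p]) : ((1 + (X : ℤ_[p][X]) • M.map C).det - C u).eval t =
      (1 + t • M).det - u := by
    rw [eval_sub, eval_C, ← coe_evalRingHom, RingHom.map_det]
    congr 2
    ext i j
    simp only [RingHom.mapMatrix_apply, Matrix.map_apply, Matrix.add_apply, Matrix.smul_apply,
      Matrix.one_apply, smul_eq_mul, coe_evalRingHom, eval_add, eval_mul, eval_X, eval_C]
    split_ifs <;> simp only [eval_one, eval_zero]
  obtain ⟨t, -, ht⟩ := exists_root_of_simple_root_toZMod
    (f := (1 + (X : ℤ_[p][X]) • M.map C).det - C u) (x := 0)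
    (by rw [heval, zero_smul, add_zero, det_one, map_sub, map_one, hu, sub_self])
    (by
      rw [derivative_sub, derivative_C, sub_zero, derivative_det_one_add_X_smul]
      exact (isUnit_iff_toZMod_ne_zero _).1 hM)
  exact ⟨t, sub_eq_zero.1 (heval t ▸ ht)⟩

end Padic

section NormClass

variable {p : ℕ} [Fact p.Prime]

/-- The class of `u` in `ℤ_p^× / (ℤ_p^×)²` lies in the image of the norm map on `R_F^×`. -/
def IsNormClass (n : ℕ) (c : ℕ → ℤ_[p]) (u : ℤ_[p]ˣ) : Prop :=
  ∃ ρ : KF ℤ_[p] ℚ_[p] n c, IsUnitRF ℤ_[p] ℚ_[p] n c ρ ∧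
    ∃ w : ℤ_[p]ˣ, Algebra.norm ℚ_[p] ρ = (((u : ℤ_[p]) : ℚ_[p])) * (((w : ℤ_[p]) : ℚ_[p])) ^ 2

theorem isNormClass_iff_det {n : ℕ} {c : ℕ → ℤ_[p]} (hc : c 0 ≠ 0) (u : ℤ_[p]ˣ) :
    IsNormClass n c u ↔ ∃ a q, ∃ w : ℤ_[p]ˣ,
      (formMatrix n (formPoly n c) a q).det = u * (w : ℤ_[p]) ^ 2 := by
  constructor
  · rintro ⟨ρ, ⟨hρ, -⟩, w, hw⟩
    obtain ⟨a, q, rfl⟩ := exists_eq_aeval_formElem hρ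
    rw [norm_aeval_formElem hc, PadicInt.algebraMap_apply, ← PadicInt.coe_pow,
      ← PadicInt.coe_mul] at hw
    exact ⟨a, q, w, PadicInt.ext hw⟩
  · rintro ⟨a, q, w, hw⟩
    refine ⟨_, isUnitRF_of_isUnit_det hc (a := a) (q := q) ?_, w, ?_⟩
    · exact hw ▸ u.isUnit.mul (w.isUnit.pow 2)
    · rw [norm_aeval_formElem hc, PadicInt.algebraMap_apply, hw, PadicInt.coe_mul, PadicInt.coe_pow]

theorem isNormClass_iff_det_toZMod (hp : 2 < p) {n : ℕ} {c : ℕ → ℤ_[p]} (hc : c 0 ≠ 0)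
    (u : ℤ_[p]ˣ) :
    IsNormClass n c u ↔ ∃ a q y, y ≠ 0 ∧
      (formMatrix n ((formPoly n c).map PadicInt.toZMod) a q).det =
        PadicInt.toZMod (u : ℤ_[p]) * y ^ 2 := by
  rw [isNormClass_iff_det hc]
  constructor
  · rintro ⟨a, q, w, hw⟩
    exact ⟨PadicInt.toZMod a, q.map PadicInt.toZMod, PadicInt.toZMod (w : ℤ_[p]),
      (isUnit_iff_toZMod_ne_zero _).1 w.isUnit,
      by rw [← map_det_formMatrix, hw, map_mul, map_pow]⟩
  · rintro ⟨a, q, y, hy, h⟩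
    obtain ⟨a, rfl⟩ := ZMod.ringHom_surjective PadicInt.toZMod a
    obtain ⟨q, rfl⟩ := map_surjective _ (ZMod.ringHom_surjective PadicInt.toZMod) q
    rw [← map_det_formMatrix] at h
    exact ⟨a, q, exists_eq_mul_sq_of_toZMod_eq hp hy h⟩

theorem isNormClass_of_odd {n : ℕ} (hn : Odd n) {c : ℕ → ℤ_[p]} (hc : c 0 ≠ 0) (u : ℤ_[p]ˣ) :
    IsNormClass n c u := by
  obtain ⟨m, rfl⟩ := hn
  refine (isNormClass_iff_det hc u).2 ⟨u, 0, u ^ m, ?_⟩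
  rw [det_formMatrix_zero, Units.val_pow_eq_pow_val]
  ring

theorem isNormClass_of_toZMod_eq_one {n k : ℕ} {c : ℕ → ℤ_[p]} (hc : c 0 ≠ 0) (hk : k ≤ n)
    (h : IsUnit (k * (formPoly n c).coeff k)) {u : ℤ_[p]ˣ}
    (hu : PadicInt.toZMod (u : ℤ_[p]) = 1) : IsNormClass n c u := by
  rw [← trace_formMatrix (formPoly n c) hk] at h
  obtain ⟨t, ht⟩ := exists_det_one_add_smul_eq h hu
  refine (isNormClass_iff_det hc u).2 ⟨1, C t * X ^ (n - k), 1, ?_⟩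
  rw [formMatrix_C_mul, one_smul, ht, Units.val_one, one_pow, mul_one]

end NormClass

section EvenRam

variable {p : ℕ} [Fact p.Prime]

theorem redForm_eq_homogenize (n : ℕ) (c : ℕ → ℤ_[p]) :
    redForm p n c = ((formPoly n c).map PadicInt.toZMod).homogenize n := by
  rw [map_formPoly, formPoly, homogenize_finsetSum, redForm]
  refine Finset.sum_congr rfl fun i hi => ?_
  have hin : i ≤ n := Nat.lt_succ_iff.1 (Finset.mem_range.1 hi)
  rw [homogenize_C_mul, homogenize_X_pow (Nat.sub_le n i), mul_assoc, Nat.sub_sub_self hin,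
    Function.comp_apply]

theorem natDegree_formPoly_map_toZMod_le (n : ℕ) (c : ℕ → ℤ_[p]) :
    ((formPoly n c).map (PadicInt.toZMod (p := p))).natDegree ≤ n :=
  natDegree_map_le.trans (natDegree_formPoly_le n c)

theorem formPoly_map_toZMod_ne_zero {n : ℕ} {c : ℕ → ℤ_[p]} (hc : PrimP p n c) :
    (formPoly n c).map (PadicInt.toZMod (p := p)) ≠ 0 := by
  obtain ⟨i, hi, hu⟩ := hc
  refine ne_of_apply_ne (fun f => f.coeff (n - i)) ?_
  rw [coeff_map, coeff_formPoly, if_pos (Nat.sub_le n i), Nat.sub_sub_self hi, coeff_zero]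
  exact (isUnit_iff_toZMod_ne_zero _).1 hu

theorem evenRamP_of_map_formPoly_eq {n : ℕ} (hn : Even n) {c : ℕ → ℤ_[p]} {κ : ZMod p} (hκ : κ ≠ 0)
    {h : (ZMod p)[X]} (hf : (formPoly n c).map PadicInt.toZMod = C κ * h ^ 2) :
    EvenRamP p n c := by
  obtain ⟨m, rfl⟩ := hn
  have hd := natDegree_formPoly_map_toZMod_le (m + m) c
  rw [hf, natDegree_C_mul hκ, natDegree_pow] at hd
  refine ⟨Units.mk0 κ hκ, h.homogenize m, ?_⟩
  rw [redForm_eq_homogenize, hf, homogenize_C_mul, pow_two, pow_two, Units.val_mk0,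
    homogenize_mul _ _ (by omega) (by omega)]

theorem EvenRamP.exists_map_formPoly_eq {n : ℕ} {c : ℕ → ℤ_[p]} (h : EvenRamP p n c) :
    ∃ κ h, κ ≠ 0 ∧ (formPoly n c).map PadicInt.toZMod = C κ * h ^ 2 := by
  obtain ⟨κ, H, hH⟩ := h
  refine ⟨κ, MvPolynomial.aeval ![X, 1] H, κ.ne_zero, ?_⟩
  rw [← aeval_homogenize_X_one _ (natDegree_formPoly_map_toZMod_le n c), ← redForm_eq_homogenize,
    hH, map_mul, map_pow, MvPolynomial.aeval_C]
  rfl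

theorem EvenRamP.even {n : ℕ} {c : ℕ → ℤ_[p]} (h : EvenRamP p n c) (hc : PrimP p n c) : Even n := by
  obtain ⟨κ, H, hH⟩ := h
  have hne : redForm p n c ≠ 0 := by
    rw [redForm_eq_homogenize, Ne, homogenize_eq_zero_iff (natDegree_formPoly_map_toZMod_le n c)]
    exact formPoly_map_toZMod_ne_zero hc
  have hdeg : (redForm p n c).totalDegree = n :=
    MvPolynomial.IsHomogeneous.totalDegree
      (redForm_eq_homogenize n c ▸ isHomogeneous_homogenize _) hne
  have hH0 : H ≠ 0 := by
    rintro rfl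
    exact hne (by rw [hH, zero_pow two_ne_zero, mul_zero])
  have hκ : (MvPolynomial.C (κ : ZMod p) : MvPolynomial (Fin 2) (ZMod p)) ≠ 0 :=
    MvPolynomial.C_ne_zero.2 κ.ne_zero
  rw [hH, pow_two, MvPolynomial.totalDegree_mul_of_isDomain hκ (mul_ne_zero hH0 hH0),
    MvPolynomial.totalDegree_mul_of_isDomain hH0 hH0, MvPolynomial.totalDegree_C, zero_add] at hdeg
  exact ⟨_, hdeg.symm⟩

theorem exists_eq_sq_of_coeff_odd_eq_zero {f : (ZMod 2)[X]} (hf : ∀ k, Odd k → f.coeff k = 0) :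
    ∃ h, f = h ^ 2 := by
  refine ⟨contract 2 f, ?_⟩
  rw [← ZMod.expand_card, expand_contract 2 ?_ two_ne_zero]
  ext j
  rw [coeff_derivative, coeff_zero]
  rcases Nat.even_or_odd j with hj | hj
  · rw [hf _ hj.add_one, zero_mul]
  · rw [← Nat.cast_add_one, ZMod.natCast_eq_zero_iff_even.2 hj.add_one, mul_zero]

theorem exists_odd_isUnit_coeff {n : ℕ} (hn : Even n) {c : ℕ → ℤ_[2]} (hE : ¬EvenRamP 2 n c) :
    ∃ k ≤ n, Odd k ∧ IsUnit ((formPoly n c).coeff k) := by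
  by_contra! hcon
  obtain ⟨h, hh⟩ : ∃ h, (formPoly n c).map PadicInt.toZMod = h ^ 2 :=
    exists_eq_sq_of_coeff_odd_eq_zero fun k hk => by
      rw [coeff_map]
      by_cases hkn : k ≤ n
      · exact not_not.1 (mt (isUnit_iff_toZMod_ne_zero _).2 (hcon k hkn hk))
      · rw [coeff_formPoly, if_neg hkn, map_zero]
  exact hE (evenRamP_of_map_formPoly_eq hn one_ne_zero (by rw [hh, C_1, one_mul]))

end EvenRam

section Main

variable {p : ℕ} [Fact p.Prime] {n : ℕ} {c : ℕ → ℤ_[p]}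

theorem isNormClass_of_not_evenRamP (hp : 2 < p) (hc : c 0 ≠ 0) (hE : ¬EvenRamP p n c)
    (u : ℤ_[p]ˣ) : IsNormClass n c u := by
  rcases Nat.even_or_odd n with hn | hn
  · rcases eq_C_mul_sq_or_forall_exists_det_formMatrix_eq
      (natDegree_formPoly_map_toZMod_le n c) with ⟨κ, h, hκ, hf⟩ | hdet
    · exact absurd (evenRamP_of_map_formPoly_eq hn hκ hf) hE
    · obtain ⟨q, y, hy, hq⟩ := hdet _ ((isUnit_iff_toZMod_ne_zero _).1 u.isUnit)
      exact (isNormClass_iff_det_toZMod hp hc u).2 ⟨1, q, y, hy, hq⟩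
  · exact isNormClass_of_odd hn hc u

theorem EvenRamP.exists_not_isNormClass (hE : EvenRamP p n c) (hp : 2 < p) (hc : c 0 ≠ 0)
    (hprim : PrimP p n c) : ∃ u, ¬IsNormClass n c u := by
  obtain ⟨κ, h, hκ, hf⟩ := hE.exists_map_formPoly_eq
  have hh : h ≠ 0 := by
    rintro rfl
    exact formPoly_map_toZMod_ne_zero hprim (by rw [hf, zero_pow two_ne_zero, mul_zero])
  obtain ⟨v, hv⟩ := FiniteField.exists_nonsquare (F := ZMod p) (by
    rw [ZMod.ringChar_zmod_n]
    exact hp.ne')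
  obtain ⟨u, rfl⟩ := ZMod.ringHom_surjective PadicInt.toZMod v
  have hu : IsUnit u := (isUnit_iff_toZMod_ne_zero u).2 fun h0 => hv (h0 ▸ IsSquare.zero)
  refine ⟨hu.unit, fun hnorm => hv ?_⟩
  obtain ⟨a, q, y, hy, hdet⟩ := (isNormClass_iff_det_toZMod hp hc _).1 hnorm
  have hsq := isSquare_det_formMatrix (hE.even hprim) hκ hh
    (hf ▸ natDegree_formPoly_map_toZMod_le n c) a q
  rw [← hf, hdet, IsUnit.unit_spec] at hsq
  rw [← mul_div_cancel_right₀ (PadicInt.toZMod u) (pow_ne_zero 2 hy)]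
  exact hsq.div (IsSquare.sq y)

theorem isNormClass_of_not_evenRamP_two {n : ℕ} {c : ℕ → ℤ_[2]} (hc : c 0 ≠ 0)
    (hE : ¬EvenRamP 2 n c) (u : ℤ_[2]ˣ) : IsNormClass n c u := by
  rcases Nat.even_or_odd n with hn | hn
  · obtain ⟨k, hkn, hk, hunit⟩ := exists_odd_isUnit_coeff hn hE
    have hk2 : IsUnit (k : ℤ_[2]) := by
      rwa [isUnit_iff_toZMod_ne_zero, map_natCast, ZMod.natCast_ne_zero_iff_odd]
    exact isNormClass_of_toZMod_eq_one hc hkn (hk2.mul hunit)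
      (Fin.eq_one_of_ne_zero _ ((isUnit_iff_toZMod_ne_zero _).1 u.isUnit))
  · exact isNormClass_of_odd hn hc u

theorem norm_map_surjectivity_general (p : ℕ) [Fact p.Prime] (n : ℕ) (c : ℕ → ℤ_[p])
    (hf0 : c 0 ≠ 0) (hprim : PrimP p n c) :
    (2 < p → ((∀ u, IsNormClass n c u) ↔ ¬EvenRamP p n c)) ∧
      (p = 2 → ¬EvenRamP p n c → ∀ u, IsNormClass n c u) := by
  refine ⟨fun hp => ⟨fun hall hE => ?_, isNormClass_of_not_evenRamP hp hf0⟩, ?_⟩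
  · obtain ⟨u, hu⟩ := hE.exists_not_isNormClass hp hf0 hprim
    exact hu (hall u)
  · rintro rfl hE
    exact isNormClass_of_not_evenRamP_two hf0 hE

end Main

/-- Lemma 3.5: surjectivity of the norm map
`R_F^×/(R_F^×)² → ℤ_p^×/(ℤ_p^×)²`. -/
theorem norm_map_surjectivity
    (p : ℕ) [Fact p.Prime]
    (n : ℕ) (hn : 3 ≤ n) (c : ℕ → ℤ_[p]) (hf0 : c 0 ≠ 0)
    (hsep : SepDegP p n c) (hprim : PrimP p n c) :
    (2 < p →
      ((∀ u : ℤ_[p]ˣ, ∃ ρ : KF ℤ_[p] ℚ_[p] n c, IsUnitRF ℤ_[p] ℚ_[p] n c ρ ∧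
          ∃ w : ℤ_[p]ˣ, Algebra.norm ℚ_[p] ρ =
            (((u : ℤ_[p]) : ℚ_[p])) * (((w : ℤ_[p]) : ℚ_[p])) ^ 2) ↔
        ¬ EvenRamP p n c)) ∧
    (p = 2 → IsMaxOrder ℤ_[p] ℚ_[p] n c → ¬ EvenRamP p n c →
      ∀ u : ℤ_[p]ˣ, ∃ ρ : KF ℤ_[p] ℚ_[p] n c, IsUnitRF ℤ_[p] ℚ_[p] n c ρ ∧
        ∃ w : ℤ_[p]ˣ, Algebra.norm ℚ_[p] ρ =
          (((u : ℤ_[p]) : ℚ_[p])) * (((w : ℤ_[p]) : ℚ_[p])) ^ 2) := by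
  have h := norm_map_surjectivity_general p n c hf0 hprim
  exact ⟨h.1, fun hp _ => h.2 hp⟩


end BHS
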